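/- arXiv:2404.19229 — 2 statements merged into one kernel-verified Lean document; each statement's English description precedes it below -/
import Mathlib

section
/- Let V be a complex vector space, u ∈ V, and N a nilpotent linear endomorphism of V with N^{n+1}u = 0 but N^n u ≠ 0. Then for every 0 ≤ k ≤ n+1 and all z ∈ ℂ, the wedge product (e^{zN}u ∧ e^{zN}Nu ∧ ... ∧ e^{zN}N^{n-k}u) ∧ (e^{z̄N}u ∧ e^{z̄N}Nu ∧ ... ∧ e^{z̄N}N^{k-1}u) equals (C_{n-k+1,k} / ((n-k+1)k)!) · (z̄ - z)^{(n-k+1)k} · (u ∧ Nu ∧ ... ∧ N^n u), where C_{n-k+1,k} is the number of standard Young tableaux of rectangular shape k × (n-k+1). -/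
/-- The number of standard Young tableaux of rectangular shape with `b` rows and
`a` columns: bijective fillings of the `b × a` rectangle by `{0, …, b*a - 1}` that
strictly increase along rows and down columns. -/
noncomputable def rectSYTCard (a b : ℕ) : ℕ :=
  Nat.card {f : Fin b × Fin a → Fin (b * a) //
    Function.Bijective f ∧
    (∀ (i : Fin b) (j j' : Fin a), j < j' → f (i, j) < f (i, j')) ∧
    (∀ (i i' : Fin b) (j : Fin a), i < i' → f (i, j) < f (i', j))}


/-- divided power `z^x / x!`, zero for negative `x`. -/
noncomputable def dp (z : ℂ) (x : ℤ) : ℂ :=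
  if 0 ≤ x then z ^ x.toNat / (x.toNat.factorial : ℂ) else 0

lemma dp_neg (z : ℂ) {x : ℤ} (h : x < 0) : dp z x = 0 := by
  simp [dp, not_le.mpr h]

lemma dp_nat (z : ℂ) (x : ℕ) : dp z (x : ℤ) = z ^ x / (x.factorial : ℂ) := by
  simp [dp]

lemma dp_zero_right (z : ℂ) : dp z 0 = 1 := by simp [dp]

lemma mul_dp_one (x : ℤ) : (x : ℂ) * dp 1 x = dp 1 (x - 1) := by
  rcases lt_trichotomy x 0 with h | h | h
  · rw [dp_neg _ h, dp_neg _ (by omega)]; simp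
  · subst h; rw [dp_neg _ (by omega : (0:ℤ) - 1 < 0)]; simp
  · obtain ⟨y, rfl⟩ : ∃ y : ℕ, x = (y + 1 : ℕ) := ⟨(x - 1).toNat, by omega⟩
    have : ((y + 1 : ℕ) : ℤ) - 1 = (y : ℤ) := by push_cast; ring
    rw [this, dp_nat, dp_nat, Nat.factorial_succ]
    push_cast
    have h1 : (y : ℂ) + 1 ≠ 0 := by exact_mod_cast Nat.succ_ne_zero y
    have h2 : (y.factorial : ℂ) ≠ 0 := by exact_mod_cast y.factorial_ne_zero
    field_simp
    simp

lemma dp_add_nat (z w : ℂ) (r : ℕ) :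
    ∑ j ∈ Finset.range (r + 1), dp w j * dp z ((r : ℤ) - j) = dp (z + w) r := by
  rw [dp_nat, add_comm z w, add_pow, Finset.sum_div]
  refine Finset.sum_congr rfl fun j hj => ?_
  have hj' : j ≤ r := by simpa [Nat.lt_succ_iff] using hj
  rw [← Nat.cast_sub hj', dp_nat, dp_nat, Nat.cast_choose ℂ hj']
  have h2 (y : ℕ) : (y.factorial : ℂ) ≠ 0 := by exact_mod_cast y.factorial_ne_zero
  have := h2 j
  have := h2 r
  have := h2 (r - j)
  field_simp

lemma dp_conv (z w : ℂ) (M : ℕ) (l i : ℕ) (hi : i < M) :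
    ∑ j : Fin M, dp w ((j : ℤ) - l) * dp z ((i : ℤ) - j) = dp (z + w) ((i : ℤ) - l) := by
  rw [Fin.sum_univ_eq_sum_range (fun j => dp w ((j : ℤ) - l) * dp z ((i : ℤ) - j))]
  by_cases h : i < l
  · rw [dp_neg _ (by omega)]
    refine Finset.sum_eq_zero fun j _ => ?_
    by_cases h' : j < l
    · rw [dp_neg _ (by omega), zero_mul]
    · rw [dp_neg z (by omega), mul_zero]
  · obtain ⟨r, rfl⟩ : ∃ r, i = l + r := ⟨i - l, by omega⟩
    have e : ((l + r : ℕ) : ℤ) - l = r := by push_cast; ring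
    rw [e, ← dp_add_nat, ← Finset.sum_subset (s₁ := Finset.Ico l (l + r + 1))]
    · rw [Finset.sum_Ico_eq_sum_range]
      refine Finset.sum_congr (by congr 1; omega) fun j _ => ?_
      congr 2 <;> push_cast <;> ring
    · intro x hx; simp at hx ⊢; omega
    · intro x hx hx'
      simp at hx hx'
      by_cases h' : x < l
      · rw [dp_neg _ (by omega), zero_mul]
      · rw [dp_neg z (by have := hx' (by omega); push_cast; omega), mul_zero]

/-- The Aitken matrix. -/
noncomputable def aitken {k : ℕ} (z : ℂ) (a : Fin k → ℤ) : Matrix (Fin k) (Fin k) ℂ :=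
  Matrix.of fun i j => dp z (a i - i + j)

lemma sum_perm_sub {k : ℕ} (σ : Equiv.Perm (Fin k)) (a : Fin k → ℤ) :
    ∑ i, (a (σ i) - ((σ i : Fin k) : ℕ) + ((i : Fin k) : ℕ) : ℤ) = ∑ i, a i := by
  rw [Finset.sum_add_distrib, Finset.sum_sub_distrib, Equiv.sum_comp σ a,
    Equiv.sum_comp σ (fun i : Fin k => ((i : ℕ) : ℤ))]
  ring

lemma aitken_rec {k : ℕ} (a : Fin k → ℤ) :
    ((∑ i, a i : ℤ) : ℂ) * (aitken 1 a).det
      = ∑ i, (aitken 1 (Function.update a i (a i - 1))).det := by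
  simp only [Matrix.det_apply, Finset.mul_sum]
  rw [Finset.sum_comm]
  refine Finset.sum_congr rfl fun σ _ => ?_
  rw [mul_smul_comm, ← Finset.smul_sum]
  congr 1
  rw [← sum_perm_sub σ a, Int.cast_sum, Finset.sum_mul]
  conv_rhs => rw [← Equiv.sum_comp σ]
  refine Finset.sum_congr rfl fun i _ => ?_
  rw [← Finset.mul_prod_erase _ _ (Finset.mem_univ i), ← Finset.mul_prod_erase _ _ (Finset.mem_univ i),
    ← mul_assoc]
  congr 1
  · simp only [aitken, Matrix.of_apply]
    rw [mul_dp_one]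
    simp
    congr 1; ring
  · refine Finset.prod_congr rfl fun j hj => ?_
    have : σ j ≠ σ i := fun h => (Finset.ne_of_mem_erase hj) (σ.injective h)
    simp [aitken, Function.update_of_ne this]

lemma dp_scale (w : ℂ) (x : ℤ) : dp w x = w ^ x.toNat * dp 1 x := by
  unfold dp; split_ifs <;> simp [div_eq_mul_inv]

lemma aitken_scale {k : ℕ} (m : ℕ) (w : ℂ) :
    (aitken w (fun _ : Fin k => (m : ℤ))).det
      = w ^ (m * k) * (aitken 1 (fun _ : Fin k => (m : ℤ))).det := by
  simp only [Matrix.det_apply, Finset.mul_sum]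
  refine Finset.sum_congr rfl fun σ _ => ?_
  rw [mul_smul_comm]
  congr 1
  by_cases h : ∀ i : Fin k, 0 ≤ ((m : ℤ) - ((σ i : Fin k) : ℕ) + (i : ℕ))
  · simp only [aitken, Matrix.of_apply]
    rw [Finset.prod_congr rfl fun i _ => dp_scale w _, Finset.prod_mul_distrib, Finset.prod_pow_eq_pow_sum]
    congr 2
    zify
    rw [Finset.sum_congr rfl fun i _ => Int.toNat_of_nonneg (h i), sum_perm_sub σ (fun _ => (m : ℤ))]
    simp [mul_comm]
  · push Not at h
    obtain ⟨i, hi⟩ := h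
    rw [Finset.prod_eq_zero (Finset.mem_univ i), Finset.prod_eq_zero (Finset.mem_univ i), mul_zero]
    · simp only [aitken, Matrix.of_apply]; exact dp_neg _ hi
    · simp only [aitken, Matrix.of_apply]; exact dp_neg _ hi

lemma aitken_zero {k : ℕ} : (aitken 1 (fun _ : Fin k => (0 : ℤ))).det = 1 := by
  rw [Matrix.det_of_isUpperTriangular]
  · simp [aitken, dp_zero_right]
  · intro i j h
    simp only [id] at h
    have : (j : ℕ) < i := h
    simp only [aitken, Matrix.of_apply]
    exact dp_neg _ (by omega)

lemma aitken_eq_zero_of_neg {k : ℕ} (a : Fin k → ℤ) (i : Fin k) (hi : a i < 0) (hi' : (i : ℕ) + 1 = k) :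
    (aitken 1 a).det = 0 := by
  apply Matrix.det_eq_zero_of_row_eq_zero i
  intro j
  simp only [aitken, Matrix.of_apply]
  exact dp_neg _ (by omega)

lemma aitken_eq_zero_of_succ {k : ℕ} (a : Fin k → ℤ) (i j : Fin k) (hij : (i : ℕ) + 1 = j)
    (h : a i + 1 = a j) :
    (aitken 1 a).det = 0 := by
  apply Matrix.det_zero_of_row_eq (i := i) (j := j) (by rintro rfl; omega)
  ext l
  simp only [aitken, Matrix.of_apply]
  congr 1; omega

/-- Exterior algebra determinants -/
lemma iotaMulti_matrix {V : Type} [AddCommGroup V] [Module ℂ V] {M : ℕ}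
    (A : Matrix (Fin M) (Fin M) ℂ) (x : Fin M → V) :
    ExteriorAlgebra.ιMulti ℂ M (fun l => ∑ i, A l i • x i) = A.det • ExteriorAlgebra.ιMulti ℂ M x := by
  let φ : (Fin M → ℂ) →ₗ[ℂ] V := Fintype.linearCombination ℂ x
  let f := (ExteriorAlgebra.ιMulti ℂ M (M := V)).compLinearMap φ
  let g := (LinearMap.toSpanSingleton ℂ (ExteriorAlgebra ℂ V)
    (ExteriorAlgebra.ιMulti ℂ M x)).compAlternatingMap
      (Matrix.detRowAlternating (R := ℂ) (n := Fin M))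
  have hφ : ∀ i, φ (Pi.basisFun ℂ (Fin M) i) = x i := by
    intro i
    simp [φ]
  have hfg : f = g := by
    refine Module.Basis.ext_alternating (Pi.basisFun ℂ (Fin M)) fun v hv => ?_
    let σ : Equiv.Perm (Fin M) := Equiv.ofBijective v (Finite.injective_iff_bijective.mp hv)
    have e1 : f (fun i => Pi.basisFun ℂ (Fin M) i) = ExteriorAlgebra.ιMulti ℂ M x := by
      simp only [f, AlternatingMap.compLinearMap_apply, hφ]
    have e2 : g (fun i => Pi.basisFun ℂ (Fin M) i) = ExteriorAlgebra.ιMulti ℂ M x := by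
      have : (Matrix.detRowAlternating (R := ℂ) (n := Fin M))
          (fun i => Pi.basisFun ℂ (Fin M) i) = 1 := by
        rw [← Pi.basisFun_det]; exact Module.Basis.det_self _
      simp only [g, LinearMap.compAlternatingMap_apply, this, LinearMap.toSpanSingleton_apply, one_smul]
    have h1 := f.map_perm (fun i => Pi.basisFun ℂ (Fin M) i) σ
    have h2 := g.map_perm (fun i => Pi.basisFun ℂ (Fin M) i) σ
    rw [e1] at h1
    rw [e2] at h2
    exact h1.trans h2.symm
  have h := AlternatingMap.ext_iff.mp hfg A
  have h3 : (fun l => ∑ i, A l i • x i) = fun l => φ (A l) := by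
    funext l
    simp only [φ, Fintype.linearCombination_apply]
  rw [h3]
  exact h

lemma det_wedge (m k : ℕ) (z y : ℂ) (A : Matrix (Fin (m + k)) (Fin (m + k)) ℂ)
    (h1 : ∀ (l : Fin m) i, A (Fin.castAdd k l) i = dp z ((i : ℕ) - (l : ℕ)))
    (h2 : ∀ (l : Fin k) i, A (Fin.natAdd m l) i = dp y ((i : ℕ) - (l : ℕ))) :
    A.det = (y - z) ^ (m * k) * (aitken 1 (fun _ : Fin k => (m : ℤ))).det := by
  rw [← aitken_scale]
  let U : Matrix (Fin (m + k)) (Fin (m + k)) ℂ := Matrix.of fun i j => dp z ((j : ℕ) - (i : ℕ))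
  let P : Matrix (Fin m ⊕ Fin k) (Fin m ⊕ Fin k) ℂ :=
    Matrix.fromBlocks 1 0 (Matrix.of fun l i => dp (y - z) ((i : ℕ) - (l : ℕ)))
      (aitken (y - z) (fun _ : Fin k => (m : ℤ)))
  have hU : U.det = 1 := by
    rw [Matrix.det_of_isUpperTriangular]
    · simp [U, dp_zero_right]
    · intro i j h
      simp only [id] at h
      have : (j : ℕ) < i := h
      simp only [U, Matrix.of_apply]
      exact dp_neg _ (by omega)
  have hA : A = (P.reindex finSumFinEquiv finSumFinEquiv) * U := by
    ext l i
    refine Fin.addCases (fun l => ?_) (fun l => ?_) l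
    · rw [h1, Matrix.mul_apply, Fin.sum_univ_add]
      simp [P, U, Matrix.one_apply]
    · rw [h2, Matrix.mul_apply]
      have := dp_conv z (y - z) (m + k) l i i.2
      rw [add_sub_cancel] at this
      rw [← this, Fin.sum_univ_add, Fin.sum_univ_add]
      simp [P, U, aitken]
      refine Finset.sum_congr rfl fun j _ => ?_
      congr 2; ring
  rw [hA, Matrix.det_mul, hU, mul_one, Matrix.det_reindex_self, Matrix.det_fromBlocks_zero₁₂,
    Matrix.det_one, one_mul]

/-- Linear extensions of a finite subset -/
def linExt {α : Type} [PartialOrder α] (S : Finset α) : Set (α → ℕ) :=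
  {f | (∀ x, x ∉ S → f x = 0) ∧ Set.BijOn f (S : Set α) (Set.Iio S.card) ∧
    StrictMonoOn f (S : Set α)}

lemma linExt_finite {α : Type} [PartialOrder α] [Finite α] (S : Finset α) : (linExt S).Finite := by
  refine (Set.Finite.pi' (t := fun _ : α => Set.Iic S.card) fun _ => Set.finite_Iic _).subset ?_
  intro f hf x
  by_cases hx : x ∈ S
  · exact le_of_lt (Set.mem_Iio.1 (hf.2.1.mapsTo hx))
  · simp [hf.1 x hx]

lemma linExt_empty {α : Type} [PartialOrder α] : (linExt (∅ : Finset α)).ncard = 1 := by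
  rw [Set.ncard_eq_one]
  refine ⟨fun _ => 0, ?_⟩
  ext f
  simp only [linExt, Set.mem_ofPred_eq, Set.mem_singleton_iff]
  constructor
  · intro h; ext x; exact h.1 x (by simp)
  · rintro rfl
    simp [StrictMonoOn, Set.BijOn, Set.MapsTo, Set.InjOn, Set.SurjOn]

lemma linExt_rec {α : Type} [PartialOrder α] [Finite α] [DecidableEq α] (S : Finset α)
    (T : Finset α) (hT : ∀ x, x ∈ T ↔ x ∈ S ∧ ∀ y ∈ S, ¬ x < y) (hS : S.Nonempty) :
    (linExt S).ncard = ∑ x ∈ T, (linExt (S.erase x)).ncard := by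
  have key : linExt S = ⋃ x ∈ T, (fun f => Function.update f x (S.card - 1)) '' linExt (S.erase x) := by
    ext f
    simp only [Set.mem_iUnion, Set.mem_image]
    have hc : 0 < S.card := hS.card_pos
    constructor
    · intro hf
      obtain ⟨x, hxS, hx⟩ := hf.2.1.surjOn (show S.card - 1 ∈ Set.Iio S.card by simp; omega)
      have hxS' : x ∈ S := hxS
      refine ⟨x, (hT x).2 ⟨hxS, fun y hy hxy => ?_⟩, Function.update f x 0, ⟨?_, ?_, ?_⟩, ?_⟩
      · have h1 := hf.2.2 hxS hy hxy
        have h2 : f y < S.card := hf.2.1.mapsTo hy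
        omega
      · intro y hy
        by_cases hyx : y = x
        · subst hyx; simp
        · rw [Function.update_of_ne hyx]
          exact hf.1 y fun h => hy (Finset.mem_erase.2 ⟨hyx, h⟩)
      · rw [Finset.card_erase_of_mem hxS']
        refine ⟨?_, ?_, ?_⟩
        · intro y hy
          have hy := Finset.mem_erase.1 (Finset.mem_coe.1 hy)
          rw [Function.update_of_ne hy.1]
          have h2 : f y < S.card := hf.2.1.mapsTo hy.2
          have h3 : f y ≠ S.card - 1 := fun h => hy.1 (hf.2.1.injOn hy.2 hxS (h.trans hx.symm))
          simp only [Set.mem_Iio]; omega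
        · intro y hy y' hy' h
          have hy := Finset.mem_erase.1 (Finset.mem_coe.1 hy)
          have hy' := Finset.mem_erase.1 (Finset.mem_coe.1 hy')
          rw [Function.update_of_ne hy.1, Function.update_of_ne hy'.1] at h
          exact hf.2.1.injOn hy.2 hy'.2 h
        · intro c hc'
          simp only [Set.mem_Iio] at hc'
          obtain ⟨y, hy, hyc⟩ := hf.2.1.surjOn (show c ∈ Set.Iio S.card by simp; omega)
          have hyx : y ≠ x := by rintro rfl; omega
          exact ⟨y, Finset.mem_coe.2 (Finset.mem_erase.2 ⟨hyx, hy⟩), by rw [Function.update_of_ne hyx]; exact hyc⟩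
      · intro y hy y' hy' h
        have hy := Finset.mem_erase.1 (Finset.mem_coe.1 hy)
        have hy' := Finset.mem_erase.1 (Finset.mem_coe.1 hy')
        rw [Function.update_of_ne hy.1, Function.update_of_ne hy'.1]
        exact hf.2.2 hy.2 hy'.2 h
      · simp [← hx]
    · rintro ⟨x, hxT, g, hg, rfl⟩
      obtain ⟨hxS, hmax⟩ := (hT x).1 hxT
      obtain ⟨h0, hb, hm⟩ := hg
      rw [Finset.card_erase_of_mem hxS] at hb
      have hlt : ∀ y ∈ S, y ≠ x → g y < S.card - 1 := fun y hy hyx =>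
        hb.mapsTo (Finset.mem_coe.2 (Finset.mem_erase.2 ⟨hyx, hy⟩))
      refine ⟨?_, ⟨?_, ?_, ?_⟩, ?_⟩
      · intro y hy
        have hyx : y ≠ x := by rintro rfl; exact hy hxS
        rw [Function.update_of_ne hyx]
        exact h0 y fun h => hy (Finset.mem_of_mem_erase h)
      · intro y hy
        simp only [Set.mem_Iio]
        by_cases hyx : y = x
        · subst hyx; simp; omega
        · rw [Function.update_of_ne hyx]
          have := hlt y hy hyx
          omega
      · intro y hy y' hy' h
        by_cases hyx : y = x <;> by_cases hyx' : y' = x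
        · rw [hyx, hyx']
        · subst hyx
          rw [Function.update_self, Function.update_of_ne hyx'] at h
          have := hlt y' hy' hyx'
          omega
        · subst hyx'
          rw [Function.update_self, Function.update_of_ne hyx] at h
          have := hlt y hy hyx
          omega
        · rw [Function.update_of_ne hyx, Function.update_of_ne hyx'] at h
          exact hb.injOn (Finset.mem_coe.2 (Finset.mem_erase.2 ⟨hyx, hy⟩))
            (Finset.mem_coe.2 (Finset.mem_erase.2 ⟨hyx', hy'⟩)) h
      · intro c hc'
        simp only [Set.mem_Iio] at hc'
        by_cases hcc : c = S.card - 1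
        · exact ⟨x, hxS, by simp [hcc]⟩
        · obtain ⟨y, hy, hyc⟩ := hb.surjOn (show c ∈ Set.Iio (S.card - 1) by simp; omega)
          have hy := Finset.mem_erase.1 (Finset.mem_coe.1 hy)
          exact ⟨y, hy.2, by rw [Function.update_of_ne hy.1]; exact hyc⟩
      · intro y hy y' hy' h
        have hyx : y ≠ x := by rintro rfl; exact hmax y' hy' h
        rw [Function.update_of_ne hyx]
        by_cases hyx' : y' = x
        · subst hyx'
          rw [Function.update_self]; exact hlt y hy hyx
        · rw [Function.update_of_ne hyx']
          exact hm (Finset.mem_coe.2 (Finset.mem_erase.2 ⟨hyx, hy⟩))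
            (Finset.mem_coe.2 (Finset.mem_erase.2 ⟨hyx', hy'⟩)) h
  have hinj : ∀ x ∈ T, Set.InjOn (fun f : α → ℕ => Function.update f x (S.card - 1)) (linExt (S.erase x)) := by
    intro x _ f hf g hg h
    ext y
    by_cases hyx : y = x
    · subst hyx
      rw [hf.1 y (by simp), hg.1 y (by simp)]
    · have := congrFun h y
      simpa [Function.update_of_ne hyx] using this
  classical
  have key2 : linExt S = ((T.biUnion fun x => (linExt_finite (S.erase x)).toFinset.image
      (fun f => Function.update f x (S.card - 1)) : Finset (α → ℕ)) : Set (α → ℕ)) := by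
    rw [key]; ext f; simp
  rw [key2, Set.ncard_coe_finset, Finset.card_biUnion]
  · refine Finset.sum_congr rfl fun x hx => ?_
    rw [Finset.card_image_of_injOn, Set.ncard_eq_toFinset_card _ (linExt_finite (S.erase x))]
    simpa using hinj x hx
  · intro x hx y hy hxy
    rw [Function.onFun, Finset.disjoint_left]
    intro h h1 h2
    simp only [Finset.mem_image, Set.Finite.mem_toFinset] at h1 h2
    obtain ⟨f, hf, rfl⟩ := h1
    obtain ⟨g, hg, hgf⟩ := h2
    have e := congrFun hgf y
    rw [Function.update_self, Function.update_of_ne hxy.symm] at e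
    have hx' := ((hT x).1 hx).1
    have hy' := ((hT y).1 hy).1
    have := hf.2.1.mapsTo (Finset.mem_coe.2 (Finset.mem_erase.2 ⟨hxy.symm, hy'⟩))
    rw [Finset.card_erase_of_mem hx', Set.mem_Iio] at this
    omega

/-- Young diagram cells -/
def cells {a b : ℕ} (lam : Fin b → ℕ) : Finset (Fin b × Fin a) :=
  Finset.univ.filter fun p => (p.2 : ℕ) < lam p.1

lemma cells_card {a b : ℕ} (lam : Fin b → ℕ) (h : ∀ i, lam i ≤ a) :
    (cells (a := a) lam).card = ∑ i, lam i := by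
  unfold cells
  rw [Finset.card_filter, Fintype.sum_prod_type]
  refine Finset.sum_congr rfl fun i _ => ?_
  rw [← Finset.card_filter]
  have := Fin.card_filter_val_lt (m := lam i) (n := a)
  simpa [h i] using this
lemma linExt_cells {a b : ℕ} (r : ℕ) : ∀ (lam : Fin b → ℕ), (∀ i, lam i ≤ a) → Antitone lam →
    ∑ i, lam i = r →
    ((linExt (cells (a := a) lam)).ncard : ℂ)
      = (r.factorial : ℂ) * (aitken 1 (fun i => (lam i : ℤ))).det := by
  induction r with
  | zero =>
    intro lam ha hl hr
    have h0 : ∀ i, lam i = 0 := by simpa using hr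
    have hc : cells (a := a) lam = ∅ := by
      ext p; simp [cells, h0]
    rw [hc, linExt_empty]
    simp [h0, aitken_zero]
  | succ r ih =>
    intro lam ha hl hr
    have hcard := cells_card (a := a) lam ha
    -- the corners
    let G : Finset (Fin b) := Finset.univ.filter fun i => 0 < lam i ∧ ∀ j, i < j → lam j < lam i
    let c : Fin b → Fin b × Fin a := fun i =>
      if h : 0 < lam i then (i, ⟨lam i - 1, by have := ha i; omega⟩)
      else (i, ⟨0, by
        obtain ⟨j, hj⟩ : ∃ j, 0 < lam j := by
          by_contra hcon
          push Not at hcon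
          have : ∑ i, lam i = 0 := Finset.sum_eq_zero fun i _ => by have := hcon i; omega
          omega
        have := ha j; omega⟩)
    have hc1 : ∀ i, (c i).1 = i := by intro i; simp only [c]; split_ifs <;> rfl
    have hc2 : ∀ i, 0 < lam i → ((c i).2 : ℕ) = lam i - 1 := by
      intro i hi; simp only [c, dif_pos hi]
    have hT : ∀ x, x ∈ G.image c ↔ x ∈ cells lam ∧ ∀ y ∈ cells lam, ¬ x < y := by
      intro x
      simp only [Finset.mem_image, G, Finset.mem_filter, Finset.mem_univ, true_and, cells]
      constructor
      · rintro ⟨i, ⟨hi, hij⟩, rfl⟩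
        refine ⟨by rw [hc1, hc2 i hi]; omega, ?_⟩
        rintro ⟨y1, y2⟩ hy hlt
        rw [Prod.lt_iff] at hlt
        rw [hc1] at hlt
        simp only at hy hlt
        have e := hc2 i hi
        rcases hlt with ⟨h1, h2⟩ | ⟨h1, h2⟩
        · have := hij y1 h1
          have : ((c i).2 : ℕ) ≤ y2 := h2
          omega
        · have := hl h1
          have : ((c i).2 : ℕ) < y2 := h2
          omega
      · rintro ⟨hx, hmax⟩
        obtain ⟨i, j⟩ := x
        simp only at hx
        have hi : 0 < lam i := by omega
        have hj : (j : ℕ) = lam i - 1 := by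
          by_contra hne
          have hla := ha i
          refine hmax (i, ⟨lam i - 1, by omega⟩) (by simp only; omega) ?_
          rw [Prod.lt_iff]
          right
          refine ⟨le_rfl, ?_⟩
          rw [Fin.lt_def]
          simp only
          omega
        refine ⟨i, ⟨hi, fun i' hi' => ?_⟩, ?_⟩
        · by_contra hcon
          refine hmax (i', j) (by simp only; omega) ?_
          rw [Prod.lt_iff]
          left
          exact ⟨hi', le_rfl⟩
        · refine Prod.ext (hc1 i) (Fin.ext ?_)
          rw [hc2 i hi, hj]
    have hne : (cells (a := a) lam).Nonempty := by
      rw [← Finset.card_pos, hcard]; omega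
    rw [linExt_rec _ _ hT hne, Finset.sum_image (fun i _ j _ h => by rw [← hc1 i, h, hc1])]
    have hrec := aitken_rec (fun i => (lam i : ℤ))
    rw [← Nat.cast_sum, hr] at hrec
    rw [Nat.factorial_succ, Nat.cast_mul, mul_comm ((r + 1 : ℕ) : ℂ), mul_assoc]
    rw [Int.cast_natCast] at hrec
    rw [hrec, Nat.cast_sum, Finset.mul_sum]
    refine Finset.sum_subset_zero_on_sdiff (Finset.subset_univ _) ?_ ?_
    · intro i hi
      have hi' : ¬ (0 < lam i ∧ ∀ j, i < j → lam j < lam i) := by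
        simpa [G] using hi
      apply mul_eq_zero_of_right
      by_cases hlast : (i : ℕ) + 1 = b
      · refine aitken_eq_zero_of_neg _ i ?_ hlast
        rw [Function.update_self]
        by_contra hcon
        exact hi' ⟨by omega, fun j hj => by have : (i : ℕ) < j := hj; omega⟩
      · have hib : (i : ℕ) + 1 < b := by omega
        have hle : lam ⟨i + 1, hib⟩ ≤ lam i := hl (by rw [Fin.le_def]; simp)
        by_cases heq : lam ⟨i + 1, hib⟩ = lam i
        · refine aitken_eq_zero_of_succ _ i ⟨i + 1, hib⟩ rfl ?_
          rw [Function.update_self, Function.update_of_ne (by simp [Fin.ext_iff])]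
          omega
        · exfalso
          refine hi' ⟨by omega, fun j hj => ?_⟩
          have : lam j ≤ lam ⟨i + 1, hib⟩ := hl (by rw [Fin.le_def]; exact hj)
          omega
    · intro i hi
      obtain ⟨hi0, hij⟩ : (0 < lam i ∧ ∀ j, i < j → lam j < lam i) := by
        simpa [G] using hi
      have hcell : (cells lam).erase (c i) = cells (a := a) (Function.update lam i (lam i - 1)) := by
        ext ⟨p, q⟩
        have e : (p, q) = c i ↔ p = i ∧ (q : ℕ) = lam i - 1 := by
          rw [Prod.ext_iff, hc1, Fin.ext_iff (a := (p, q).2), hc2 i hi0]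
        simp only [Finset.mem_erase, ne_eq, e, cells, Finset.mem_filter, Finset.mem_univ, true_and]
        by_cases hp : p = i
        · subst hp
          simp only [Function.update_self, true_and]
          omega
        · simp [hp]
      rw [hcell, ih]
      · congr 3
        funext j
        by_cases hj : j = i
        · subst hj; simp only [Function.update_self]; omega
        · simp only [Function.update_of_ne hj]
      · intro j
        by_cases hj : j = i
        · subst hj; simp only [Function.update_self]; have := ha j; omega
        · simp only [Function.update_of_ne hj]; exact ha j
      · intro p q hpq
        have := hl hpq
        by_cases hp : p = i <;> by_cases hq : q = i
        · subst hp; subst hq; exact le_rfl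
        · subst hp
          simp only [Function.update_self, Function.update_of_ne hq]
          have := hij q (lt_of_le_of_ne hpq (Ne.symm hq))
          omega
        · subst hq
          simp only [Function.update_self, Function.update_of_ne hp]
          omega
        · simp only [Function.update_of_ne hp, Function.update_of_ne hq]; exact this
      · have := Finset.sum_update_of_mem (Finset.mem_univ i) lam (lam i - 1)
        rw [this]
        have := Finset.add_sum_erase Finset.univ lam (Finset.mem_univ i)
        rw [Finset.sdiff_singleton_eq_erase]
        omega

lemma rectSYTCard_eq (a b : ℕ) :
    rectSYTCard a b = (linExt (Finset.univ : Finset (Fin b × Fin a))).ncard := by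
  unfold rectSYTCard
  rw [← Nat.card_coe_set_eq]
  have hcard : (Finset.univ : Finset (Fin b × Fin a)).card = b * a := by simp
  refine Nat.card_congr ⟨fun f => ⟨fun p => (f.1 p : ℕ), ?_⟩, fun g => ⟨fun p => ⟨g.1 p, ?_⟩, ?_⟩, ?_, ?_⟩
  · obtain ⟨f, hf, hr, hc⟩ := f
    refine ⟨by simp, ⟨?_, ?_, ?_⟩, ?_⟩
    · intro p _; rw [hcard]; exact (f p).2
    · intro p _ q _ h; exact hf.1 (Fin.ext h)
    · intro y hy
      rw [hcard] at hy
      obtain ⟨p, hp⟩ := hf.2 ⟨y, hy⟩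
      exact ⟨p, by simp, by simp [hp]⟩
    · rintro ⟨i, j⟩ _ ⟨i', j'⟩ _ h
      simp only [Fin.val_fin_lt]
      rw [Prod.lt_iff] at h
      rcases h with ⟨h1, h2⟩ | ⟨h1, h2⟩
      · simp only at h1 h2
        rcases eq_or_lt_of_le h2 with h2 | h2
        · subst h2; exact hc _ _ _ h1
        · exact (hc _ _ _ h1).trans (hr _ _ _ h2)
      · simp only at h1 h2
        rcases eq_or_lt_of_le h1 with h1 | h1
        · subst h1; exact hr _ _ _ h2
        · exact (hc _ _ _ h1).trans (hr _ _ _ h2)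
  · have := g.2.2.1.mapsTo (show p ∈ _ by simp)
    rw [hcard] at this
    exact this
  · obtain ⟨g, hg0, hg, hm⟩ := g
    refine ⟨⟨?_, ?_⟩, ?_, ?_⟩
    · intro p q h
      exact hg.injOn (by simp) (by simp) (congrArg Fin.val h)
    · intro y
      obtain ⟨p, _, hp⟩ := hg.surjOn (show (y : ℕ) ∈ _ by rw [hcard]; exact y.2)
      exact ⟨p, Fin.ext hp⟩
    · intro i j j' h
      exact hm (by simp) (by simp) (by rw [Prod.lt_iff]; exact Or.inr ⟨le_rfl, h⟩)
    · intro i i' j h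
      exact hm (by simp) (by simp) (by rw [Prod.lt_iff]; exact Or.inl ⟨h, le_rfl⟩)
  · intro f; rfl
  · intro g; rfl

lemma rectSYTCard_det (m k : ℕ) :
    (rectSYTCard m k : ℂ) / ((m * k).factorial : ℂ)
      = (aitken 1 (fun _ : Fin k => (m : ℤ))).det := by
  have h := linExt_cells (a := m) (b := k) (m * k) (fun _ => m) (fun _ => le_rfl)
    (fun _ _ _ => le_rfl) (by simp [mul_comm])
  have hu : cells (a := m) (fun _ : Fin k => m) = Finset.univ := by
    ext p; simp [cells]
  rw [hu, ← rectSYTCard_eq] at h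
  have h2 : ((m * k).factorial : ℂ) ≠ 0 := by exact_mod_cast (m * k).factorial_ne_zero
  rw [h]; field_simp

lemma exp_apply {V : Type} [AddCommGroup V] [Module ℂ V]
    (N : V →ₗ[ℂ] V) (K : ℕ) (u : V) (M : ℕ) (hu' : (N ^ M) u = 0) (hK : N ^ K = 0)
    (z : ℂ) (l : ℕ) :
    (∑ j ∈ Finset.range K, (z ^ j / (j.factorial : ℂ)) • (N ^ j)) ((N ^ l) u)
      = ∑ i : Fin M, dp z ((i : ℕ) - (l : ℕ)) • (N ^ (i : ℕ)) u := by
  have hM : ∀ i, M ≤ i → (N ^ i) u = 0 := by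
    intro i hi
    obtain ⟨t, rfl⟩ := Nat.exists_eq_add_of_le' hi
    rw [pow_add, Module.End.mul_apply, hu', map_zero]
  have hK' : ∀ i, K ≤ i → (N ^ i) u = 0 := by
    intro i hi
    rw [pow_eq_zero_of_le hi hK]; rfl
  rw [Fin.sum_univ_eq_sum_range (fun i => dp z ((i : ℕ) - (l : ℕ)) • (N ^ (i : ℕ)) u) M]
  have h1 : ∑ i ∈ Finset.range M, dp z ((i : ℕ) - (l : ℕ)) • (N ^ (i : ℕ)) u
      = ∑ i ∈ Finset.range (l + (K + M)), dp z ((i : ℕ) - (l : ℕ)) • (N ^ (i : ℕ)) u := by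
    refine Finset.sum_subset (fun x hx => ?_) (fun x _ hx => ?_)
    · simp at hx ⊢; omega
    · rw [hM x (by simpa using hx), smul_zero]
  rw [LinearMap.sum_apply, h1, Finset.sum_range_add,
    Finset.sum_eq_zero (s := Finset.range l), zero_add]
  · refine (Finset.sum_subset (s₂ := Finset.range (K + M)) (fun x hx => ?_) (fun x _ hx => ?_)).trans ?_
    · simp at hx ⊢; omega
    · rw [LinearMap.smul_apply, ← Module.End.mul_apply, ← pow_add,
        hK' _ (by have : K ≤ x := by simpa using hx
                  omega), smul_zero]
    · refine Finset.sum_congr rfl fun j _ => ?_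
      rw [LinearMap.smul_apply, ← Module.End.mul_apply, ← pow_add, add_comm j l]
      congr 1
      have : ((l + j : ℕ) : ℤ) - l = j := by push_cast; ring
      rw [this, dp_nat]
  · intro i hi
    rw [dp_neg _ (by simp at hi; omega), zero_smul]

lemma range_map_eq_ofFn {β : Type} (f : ℕ → β) (n : ℕ) :
    (List.range n).map f = List.ofFn fun i : Fin n => f i := by
  apply List.ext_getElem <;> simp

open ExteriorAlgebra in
/-- The combinatorial wedge lemma: if `N^{n+1} u = 0` but `N^n u ≠ 0`, then for
`0 ≤ k ≤ n+1` and `z ∈ ℂ`,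
`(e^{zN}u ∧ ⋯ ∧ e^{zN}N^{n-k}u) ∧ (e^{z̄N}u ∧ ⋯ ∧ e^{z̄N}N^{k-1}u)
  = (C_{n-k+1,k}/((n-k+1)k)!) (z̄ - z)^{(n-k+1)k} · (u ∧ Nu ∧ ⋯ ∧ N^n u)`,
where `C_{n-k+1,k}` is the number of standard Young tableaux of rectangular shape
with `k` rows and `n-k+1` columns. -/
theorem wedge_exp_nilpotent
    (V : Type) [AddCommGroup V] [Module ℂ V]
    (N : V →ₗ[ℂ] V) (hNnil : IsNilpotent N)
    (K : ℕ) (hK : N ^ K = 0)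
    (E : ℂ → (V →ₗ[ℂ] V))
    (hE : ∀ z : ℂ, E z = ∑ j ∈ Finset.range K, (z ^ j / (j.factorial : ℂ)) • (N ^ j))
    (u : V) (n : ℕ) (hu : (N ^ n) u ≠ 0) (hu' : (N ^ (n + 1)) u = 0)
    (k : ℕ) (hk : k ≤ n + 1) (z : ℂ) :
    (((List.range (n + 1 - k)).map fun l =>
        ExteriorAlgebra.ι ℂ (E z ((N ^ l) u))).prod *
      ((List.range k).map fun l =>
        ExteriorAlgebra.ι ℂ (E (starRingEnd ℂ z) ((N ^ l) u))).prod)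
    = (((rectSYTCard (n + 1 - k) k : ℂ) / (((n + 1 - k) * k).factorial : ℂ)) *
        (starRingEnd ℂ z - z) ^ ((n + 1 - k) * k)) •
      ((List.range (n + 1)).map fun l => ExteriorAlgebra.ι ℂ ((N ^ l) u)).prod := by
  obtain ⟨m, hm⟩ : ∃ m, n + 1 = m + k := ⟨n + 1 - k, by omega⟩
  have hmk : n + 1 - k = m := by omega
  rw [hmk, hm, rectSYTCard_det, mul_comm (aitken 1 _).det]
  rw [hm] at hu'
  let A : Matrix (Fin (m + k)) (Fin (m + k)) ℂ := Matrix.of fun l i =>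
    Fin.addCases (fun l : Fin m => dp z ((i : ℕ) - (l : ℕ)))
      (fun l : Fin k => dp (starRingEnd ℂ z) ((i : ℕ) - (l : ℕ))) l
  have h1 : ∀ (l : Fin m) i, A (Fin.castAdd k l) i = dp z ((i : ℕ) - (l : ℕ)) := by
    intro l i; simp [A]
  have h2 : ∀ (l : Fin k) i, A (Fin.natAdd m l) i = dp (starRingEnd ℂ z) ((i : ℕ) - (l : ℕ)) := by
    intro l i; simp [A]
  rw [← det_wedge m k z (starRingEnd ℂ z) A h1 h2]
  have h3 := iotaMulti_matrix A (fun i => (N ^ (i : ℕ)) u)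
  rw [ExteriorAlgebra.ιMulti_apply, ExteriorAlgebra.ιMulti_apply] at h3
  rw [range_map_eq_ofFn, range_map_eq_ofFn, range_map_eq_ofFn, ← h3, List.ofFn_add, List.prod_append]
  have h1' : ∀ (l : Fin m) (h : m ≤ m + k) i, A (Fin.castLE h l) i = dp z ((i : ℕ) - (l : ℕ)) :=
    fun l _ i => h1 l i
  simp only [h1', h2, hE, exp_apply N K u (m + k) hu' hK]
end

section
/- Let H be a finite-dimensional complex vector space with real structure, d an integer, and suppose (H, W, F) is a mixed Hodge structure split over ℝ (i.e. H = ⊕ I^{p,q} with conj(I^{p,q}) = I^{q,p}, W_l = ⊕_{p+q≤l} I^{p,q}, F^r = ⊕_{p≥r} I^{p,q}), with N a real nilpotent endomorphism satisfying N I^{p,q} ⊆ I^{p-1,q-1} and W = W(N,d). Then for every k and every z ∈ ℂ with Im(z) ≠ 0, exp(zN)F^k ⊕ conj(exp(zN)F^{d-k+1}) = H. -/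
namespace SplitMHS

/-- A finite system of projections onto the pieces of a bigrading. -/
structure Proj {H : Type} [AddCommGroup H] [Module ℂ H]
    (I : ℤ × ℤ → Submodule ℂ H) (π : ℤ × ℤ → H →ₗ[ℂ] H) (T : Finset (ℤ × ℤ)) : Prop where
  same : ∀ a x, x ∈ I a → π a x = x
  ne : ∀ a b x, x ∈ I a → b ≠ a → π b x = 0
  mem : ∀ a x, π a x ∈ I a
  sum : ∀ x, ∑ a ∈ T, π a x = x

theorem exists_proj {H : Type} [AddCommGroup H] [Module ℂ H] [FiniteDimensional ℂ H]
    (I : ℤ × ℤ → Submodule ℂ H) (hI : DirectSum.IsInternal I) :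
    ∃ π T, Proj I π T := by
  classical
  let := hI.chooseDecomposition
  have hfin : {i | I i ≠ ⊥}.Finite :=
    WellFoundedGT.finite_ne_bot_of_iSupIndep hI.submodule_iSupIndep
  refine ⟨fun a => (I a).subtype ∘ₗ DirectSum.component ℂ _ _ a ∘ₗ
    (DirectSum.decomposeLinearEquiv I).toLinearMap, hfin.toFinset, ?_, ?_, ?_, ?_⟩
  · intro a x hx
    exact DirectSum.decompose_of_mem_same I hx
  · intro a b x hx hb
    exact DirectSum.decompose_of_mem_ne I hx hb.symm
  · intro a x
    exact (DirectSum.decompose I x a).2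
  · intro x
    conv_rhs => rw [← DirectSum.sum_support_decompose I x]
    symm
    apply Finset.sum_subset
    · intro a ha
      simp only [Set.Finite.mem_toFinset, Set.mem_ofPred_eq]
      intro hbot
      rw [DFinsupp.mem_support_iff] at ha
      apply ha
      have := (DirectSum.decompose I x a).2
      ext
      simpa [hbot] using this
    · intro a _ ha
      rw [DFinsupp.notMem_support_iff] at ha
      simp [ha]

section
variable {H : Type} [AddCommGroup H] [Module ℂ H]
  {I : ℤ × ℤ → Submodule ℂ H} {π : ℤ × ℤ → H →ₗ[ℂ] H} {T : Finset (ℤ × ℤ)}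

theorem Proj.zero (h : Proj I π T) {a : ℤ × ℤ} (ha : a ∉ T) (x : H) : π a x = 0 := by
  have h1 := h.sum (π a x)
  rw [Finset.sum_eq_zero] at h1
  · exact h1.symm
  · intro b hb
    exact h.ne a b _ (h.mem a x) (by rintro rfl; exact ha hb)

theorem Proj.ext (h : Proj I π T) {x y : H} (hxy : ∀ a, π a x = π a y) : x = y := by
  rw [← h.sum x, ← h.sum y]
  exact Finset.sum_congr rfl fun a _ => hxy a

theorem Proj.mem_iff (h : Proj I π T) (s : ℤ × ℤ → Prop) (x : H) :
    x ∈ (⨆ a : ℤ × ℤ, ⨆ _ : s a, I a) ↔ ∀ a, ¬ s a → π a x = 0 := by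
  constructor
  · intro hx a ha
    have : (⨆ a : ℤ × ℤ, ⨆ _ : s a, I a) ≤ LinearMap.ker (π a) := by
      refine iSup_le fun b => iSup_le fun hb y hy => ?_
      exact h.ne b a y hy (by rintro rfl; exact ha hb)
    exact this hx
  · intro hx
    rw [← h.sum x]
    refine Submodule.sum_mem _ fun a _ => ?_
    by_cases ha : s a
    · exact Submodule.mem_iSup_of_mem a (Submodule.mem_iSup_of_mem ha (h.mem a x))
    · rw [hx a ha]; exact Submodule.zero_mem _

theorem Proj.comm (h : Proj I π T) (N : H →ₗ[ℂ] H)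
    (hNI : ∀ pq : ℤ × ℤ, Submodule.map N (I pq) ≤ I (pq.1 - 1, pq.2 - 1))
    (a : ℤ × ℤ) (x : H) : π a (N x) = N (π (a.1 + 1, a.2 + 1) x) := by
  have key : ∀ b, ∀ y ∈ I b, π a (N y) = N (π (a.1 + 1, a.2 + 1) y) := by
    intro b y hy
    have hNy : N y ∈ I (b.1 - 1, b.2 - 1) := hNI b ⟨y, hy, rfl⟩
    by_cases hb : b = (a.1 + 1, a.2 + 1)
    · subst hb
      rw [h.same _ y hy]
      apply h.same
      simpa using hNy
    · rw [h.ne b _ y hy (Ne.symm hb), map_zero]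
      apply h.ne _ _ _ hNy
      rintro rfl
      apply hb
      simp
  rw [← h.sum x]
  simp only [map_sum]
  exact Finset.sum_congr rfl fun b _ => key b _ (h.mem b x)

theorem Proj.comm_pow (h : Proj I π T) (N : H →ₗ[ℂ] H)
    (hNI : ∀ pq : ℤ × ℤ, Submodule.map N (I pq) ≤ I (pq.1 - 1, pq.2 - 1))
    (j : ℕ) (a : ℤ × ℤ) (x : H) :
    π a ((N ^ j) x) = (N ^ j) (π (a.1 + j, a.2 + j) x) := by
  induction j generalizing a with
  | zero => simp
  | succ j ih =>
    rw [pow_succ', Module.End.mul_apply, Module.End.mul_apply, h.comm N hNI, ih]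
    congr 4
    ext <;> push_cast <;> ring

theorem pow_mem (N : H →ₗ[ℂ] H)
    (hNI : ∀ pq : ℤ × ℤ, Submodule.map N (I pq) ≤ I (pq.1 - 1, pq.2 - 1))
    (j : ℕ) (a : ℤ × ℤ) (x : H) (hx : x ∈ I a) : (N ^ j) x ∈ I (a.1 - j, a.2 - j) := by
  induction j with
  | zero => simpa using hx
  | succ j ih =>
    rw [pow_succ', Module.End.mul_apply]
    have := hNI _ ⟨_, ih, rfl⟩
    convert this using 2
    ext <;> push_cast <;> ring

/-- multiplication by `p` on `I^{p,q}` -/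
noncomputable def P (π : ℤ × ℤ → H →ₗ[ℂ] H) (T : Finset (ℤ × ℤ)) : H →ₗ[ℂ] H :=
  ∑ a ∈ T, (a.1 : ℂ) • π a

theorem Proj.P_apply (h : Proj I π T) (a : ℤ × ℤ) (x : H) :
    π a (P π T x) = (a.1 : ℂ) • π a x := by
  by_cases ha : a ∈ T
  · simp only [P, LinearMap.sum_apply, LinearMap.smul_apply, map_sum, map_smul]
    rw [Finset.sum_eq_single a]
    · rw [h.same a _ (h.mem a x)]
    · intro b _ hb
      rw [h.ne b a _ (h.mem b x) hb.symm, smul_zero]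
    · exact fun h' => absurd ha h'
  · rw [h.zero ha, h.zero ha, smul_zero]

theorem Proj.P_pow (h : Proj I π T) (N : H →ₗ[ℂ] H)
    (hNI : ∀ pq : ℤ × ℤ, Submodule.map N (I pq) ≤ I (pq.1 - 1, pq.2 - 1))
    (j : ℕ) (x : H) :
    P π T ((N ^ j) x) = (N ^ j) (P π T x) - (j : ℂ) • (N ^ j) x := by
  apply h.ext
  intro a
  rw [h.P_apply, map_sub, map_smul, h.comm_pow N hNI, h.comm_pow N hNI, h.P_apply, map_smul,
    ← sub_smul]
  congr 1
  push_cast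
  ring

/-- truncated exponential -/
noncomputable def ex (N : H →ₗ[ℂ] H) (K : ℕ) (z : ℂ) : H →ₗ[ℂ] H :=
  ∑ j ∈ Finset.range K, (z ^ j / (j.factorial : ℂ)) • (N ^ j)

theorem ex_apply (N : H →ₗ[ℂ] H) (K : ℕ) (z : ℂ) (x : H) :
    ex N K z x = ∑ j ∈ Finset.range K, (z ^ j / (j.factorial : ℂ)) • (N ^ j) x := by
  simp [ex]

theorem ex_add (N : H →ₗ[ℂ] H) (K : ℕ) (hK : N ^ K = 0) (z w : ℂ) (x : H) :
    ex N K z (ex N K w x) = ex N K (z + w) x := by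
  let : Module ℚ (Module.End ℂ H) := Module.compHom _ (algebraMap ℚ ℂ)
  have hz : ∀ z : ℂ, ((z • N : Module.End ℂ H)) ^ K = 0 := fun z => by
    rw [smul_pow, hK, smul_zero]
  have e : ∀ z, ex N K z = IsNilpotent.exp (z • N : Module.End ℂ H) := by
    intro z
    rw [IsNilpotent.exp_eq_sum (hz z), ex]
    refine Finset.sum_congr rfl fun j _ => ?_
    change _ = (algebraMap ℚ ℂ ((j.factorial : ℚ)⁻¹)) • (z • N : Module.End ℂ H) ^ j
    rw [smul_pow, smul_smul]
    congr 1
    simp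
    ring
  rw [e, e, e, add_smul, IsNilpotent.exp_add_of_commute _ ⟨K, hz z⟩ ⟨K, hz w⟩]
  · rfl
  · exact ((Commute.refl N).smul_left z).smul_right w

theorem ex_zero (N : H →ₗ[ℂ] H) (K : ℕ) (hK : N ^ K = 0) (x : H) :
    ex N K 0 x = x := by
  rw [ex_apply]
  cases K with
  | zero =>
    have : x = 0 := by
      have := congrArg (fun f : H →ₗ[ℂ] H => f x) hK
      simpa using this
    simp [this]
  | succ K =>
    rw [Finset.sum_range_succ']
    simp

theorem Proj.P_ex (h : Proj I π T) (N : H →ₗ[ℂ] H)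
    (hNI : ∀ pq : ℤ × ℤ, Submodule.map N (I pq) ≤ I (pq.1 - 1, pq.2 - 1))
    (K : ℕ) (hK : N ^ K = 0) (w : ℂ) (x : H) :
    P π T (ex N K w x) = ex N K w (P π T x - w • N x) := by
  have h1 : ∑ j ∈ Finset.range K, (w ^ j / (j.factorial : ℂ)) • ((j : ℂ) • (N ^ j) x)
      = ∑ j ∈ Finset.range K, (w ^ j / (j.factorial : ℂ)) • ((N ^ j) (w • N x)) := by
    have h2 := Finset.sum_range_succ
      (fun j => (w ^ j / (j.factorial : ℂ)) • ((j : ℂ) • (N ^ j) x)) K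
    rw [Finset.sum_range_succ'] at h2
    simp only [hK, LinearMap.zero_apply, smul_zero, add_zero, Nat.cast_zero, zero_smul] at h2
    rw [← h2]
    refine Finset.sum_congr rfl fun j _ => ?_
    rw [map_smul, smul_smul, smul_smul, pow_succ N, Module.End.mul_apply]
    congr 1
    have : (j.factorial : ℂ) ≠ 0 := by exact_mod_cast j.factorial_ne_zero
    have : (j : ℂ) + 1 ≠ 0 := by exact_mod_cast j.succ_ne_zero
    rw [Nat.factorial_succ]
    push_cast
    field_simp
    ring
  rw [map_sub, ex_apply, ex_apply, ex_apply, map_sum, ← h1, ← Finset.sum_sub_distrib]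
  refine Finset.sum_congr rfl fun j _ => ?_
  rw [map_smul, h.P_pow N hNI, smul_sub]

/-- Hodge filtration -/
def FF (I : ℤ × ℤ → Submodule ℂ H) (r : ℤ) : Submodule ℂ H :=
  ⨆ pq : ℤ × ℤ, ⨆ _ : r ≤ pq.1, I pq

/-- conjugate Hodge filtration -/
def GG (I : ℤ × ℤ → Submodule ℂ H) (r : ℤ) : Submodule ℂ H :=
  ⨆ pq : ℤ × ℤ, ⨆ _ : r ≤ pq.2, I pq

theorem Proj.P_F (h : Proj I π T) (k : ℤ) (x : H) (hx : x ∈ FF I k) :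
    P π T x - (k : ℂ) • x ∈ FF I (k + 1) := by
  unfold FF at *
  rw [h.mem_iff] at *
  intro a ha
  rw [map_sub, map_smul, h.P_apply, ← sub_smul]
  by_cases hk : k ≤ a.1
  · have : a.1 = k := by omega
    rw [this, sub_self, zero_smul]
  · rw [hx a hk, smul_zero]

theorem Proj.P_G (h : Proj I π T) (N : H →ₗ[ℂ] H)
    (hNI : ∀ pq : ℤ × ℤ, Submodule.map N (I pq) ≤ I (pq.1 - 1, pq.2 - 1))
    (K : ℕ) (hK : N ^ K = 0) (w : ℂ) (k m : ℤ) (x : H)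
    (hx : x ∈ (GG I m).map (ex N K w)) :
    P π T x - (k : ℂ) • x ∈ (GG I (m - 1)).map (ex N K w) := by
  obtain ⟨y, hy, rfl⟩ := hx
  refine ⟨P π T y - w • N y - (k : ℂ) • y, ?_, ?_⟩
  · have hy : y ∈ GG I m := hy
    change _ ∈ GG I (m - 1)
    unfold GG at *
    rw [h.mem_iff] at *
    intro a ha
    rw [map_sub, map_sub, map_smul, map_smul, h.P_apply, h.comm N hNI,
      hy a (by omega), hy (a.1 + 1, a.2 + 1) (by simp only; omega)]
    simp
  · rw [h.P_ex N hNI K hK, map_sub _ _ ((k : ℂ) • y), map_smul]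

theorem Proj.disj (h : Proj I π T) (N : H →ₗ[ℂ] H)
    (hNI : ∀ pq : ℤ × ℤ, Submodule.map N (I pq) ≤ I (pq.1 - 1, pq.2 - 1))
    (K : ℕ) (hK : N ^ K = 0) (w : ℂ) (hw : w ≠ 0) (d : ℤ)
    (hinj : ∀ (a : ℤ × ℤ) (l : ℕ), (l : ℤ) ≤ a.1 + a.2 - d → ∀ x ∈ I a, (N ^ l) x = 0 → x = 0)
    (B : ℤ) (hB : ∀ a ∈ T, a.1 < B) (n : ℕ) :
    ∀ k : ℤ, B - n ≤ k → ∀ x ∈ FF I k, x ∈ (GG I (d - k + 1)).map (ex N K w) → x = 0 := by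
  induction n with
  | zero =>
    intro k hk x hx _
    unfold FF at hx
    rw [h.mem_iff] at hx
    apply h.ext
    intro a
    rw [map_zero]
    by_cases ha : a ∈ T
    · have := hB a ha
      exact hx a (by simp at hk; omega)
    · exact h.zero ha x
  | succ n ih =>
    intro k hk x hx hxG
    have hP : P π T x - (k : ℂ) • x = 0 := by
      apply ih (k + 1) (by push_cast at hk; omega) _ (h.P_F k x hx)
      have := h.P_G N hNI K hK w k _ x hxG
      convert this using 3
      ring
    have hpure : ∀ a : ℤ × ℤ, a.1 ≠ k → π a x = 0 := by
      intro a ha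
      have := congrArg (π a) hP
      rw [map_sub, map_smul, h.P_apply, ← sub_smul, map_zero] at this
      rcases smul_eq_zero.1 this with h1 | h1
      · exact absurd (by exact_mod_cast sub_eq_zero.1 h1) ha
      · exact h1
    obtain ⟨y, hy, rfl⟩ := hxG
    set x := ex N K w y with hxdef
    have hyx : y = ex N K (-w) x := by
      rw [hxdef, ex_add N K hK, neg_add_cancel, ex_zero N K hK]
    have hy : y ∈ GG I (d - k + 1) := hy
    unfold GG at hy
    rw [h.mem_iff] at hy
    -- all the relevant powers vanish
    have hpow : ∀ (q : ℤ) (j : ℕ), q - j < d - k + 1 → (N ^ j) (π (k, q) x) = 0 := by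
      intro q j hj
      by_cases hjK : j < K
      · have h1 := hy (k - j, q - j) (by simp only; omega)
        rw [hyx, ex_apply, map_sum, Finset.sum_eq_single j] at h1
        · rw [map_smul, h.comm_pow N hNI] at h1
          rcases smul_eq_zero.1 h1 with h2 | h2
          · exfalso
            rw [div_eq_zero_iff] at h2
            rcases h2 with h2 | h2
            · exact pow_ne_zero _ (neg_ne_zero.2 hw) h2
            · exact j.factorial_ne_zero (by exact_mod_cast h2)
          · simpa using h2
        · intro i _ hij
          rw [map_smul, h.comm_pow N hNI, hpure _ (by simp only; omega), map_zero, smul_zero]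
        · intro h3
          exact absurd (Finset.mem_range.2 hjK) h3
      · rw [pow_eq_zero_of_le (by omega) hK, LinearMap.zero_apply]
    apply h.ext
    rintro ⟨p, q⟩
    rw [map_zero]
    by_cases hp : p = k
    · subst hp
      by_cases h0 : 0 ≤ q - (d - p + 1) + 1
      · have h1 := Int.toNat_of_nonneg h0
        apply hinj (p, q) (q - (d - p + 1) + 1).toNat
        · simp only
          omega
        · exact h.mem _ _
        · apply hpow
          omega
      · have := hpow q 0 (by push_cast; omega)
        simpa using this
    · exact hpure _ hp

theorem Proj.codisj (h : Proj I π T) (N : H →ₗ[ℂ] H)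
    (hNI : ∀ pq : ℤ × ℤ, Submodule.map N (I pq) ≤ I (pq.1 - 1, pq.2 - 1))
    (K : ℕ) (hK : N ^ K = 0) (w : ℂ) (hw : w ≠ 0) (d : ℤ)
    (hsurj : ∀ (a : ℤ × ℤ) (l : ℕ), d - l = a.1 + a.2 → ∀ u ∈ I a,
      ∃ v ∈ I (a.1 + l, a.2 + l), (N ^ l) v = u)
    (B : ℤ) (hB : ∀ a ∈ T, -B < a.1) (n : ℕ) :
    ∀ k : ℤ, k ≤ -B + n → FF I k ⊔ (GG I (d - k + 1)).map (ex N K w) = ⊤ := by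
  induction n with
  | zero =>
    intro k hk
    rw [eq_top_iff]
    refine le_trans ?_ le_sup_left
    intro x _
    unfold FF
    rw [h.mem_iff]
    intro a ha
    by_cases haT : a ∈ T
    · have := hB a haT
      exact absurd (by simp at hk; omega) ha
    · exact h.zero haT x
  | succ n ih =>
    intro k' hk'
    obtain ⟨k, rfl⟩ : ∃ k, k' = k + 1 := ⟨k' - 1, by ring⟩
    have ihk := ih k (by push_cast at hk'; omega)
    set S := FF I (k + 1) ⊔ (GG I (d - (k + 1) + 1)).map (ex N K w) with hS
    have hPS : ∀ x, P π T x - (k : ℂ) • x ∈ S := by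
      intro x
      have hx : x ∈ FF I k ⊔ (GG I (d - k + 1)).map (ex N K w) := ihk ▸ Submodule.mem_top
      obtain ⟨y, hy, z, hz, rfl⟩ := Submodule.mem_sup.1 hx
      have h1 := h.P_F k y hy
      have h2 := h.P_G N hNI K hK w k _ z hz
      rw [show d - k + 1 - 1 = d - (k + 1) + 1 by ring] at h2
      have := Submodule.add_mem_sup h1 h2
      convert this using 1
      rw [map_add, smul_add]
      abel
    have hne : ∀ a : ℤ × ℤ, a.1 ≠ k → ∀ x ∈ I a, x ∈ S := by
      intro a ha x hx
      have h1 : P π T x = (a.1 : ℂ) • x := by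
        apply h.ext
        intro b
        rw [h.P_apply, map_smul]
        by_cases hb : b = a
        · rw [hb]
        · rw [h.ne a b x hx hb, smul_zero, smul_zero]
      have h2 := hPS x
      rw [h1, ← sub_smul] at h2
      refine (Submodule.smul_mem_iff S ?_).1 h2
      rw [sub_ne_zero]
      exact_mod_cast ha
    have key : ∀ (q : ℤ), ∀ u ∈ I (k, q), u ∈ S := by
      intro q u hu
      obtain ⟨l, v, hv, hvu, hl⟩ : ∃ l : ℕ, ∃ v ∈ I (k + l, q + l), (N ^ l) v = u ∧
          d - (k + 1) + 1 ≤ q + l := by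
        by_cases hq : d - k ≤ q
        · exact ⟨0, u, by simpa using hu, by simp, by push_cast; omega⟩
        · have h1 : (((d - k - q).toNat : ℕ) : ℤ) = d - k - q := Int.toNat_of_nonneg (by omega)
          obtain ⟨v, hv, hvu⟩ := hsurj (k, q) (d - k - q).toNat (by simp only; omega) u hu
          exact ⟨_, v, hv, hvu, by omega⟩
      by_cases hlK : l < K
      · have hE : ex N K w v ∈ S := by
          apply Submodule.mem_sup_right
          refine ⟨v, ?_, rfl⟩
          exact Submodule.mem_iSup_of_mem (k + (l : ℤ), q + (l : ℤ))
            (Submodule.mem_iSup_of_mem hl hv)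
        rw [ex_apply, ← Finset.add_sum_erase _ _ (Finset.mem_range.2 hlK)] at hE
        have hrest : ∑ j ∈ (Finset.range K).erase l,
            (w ^ j / (j.factorial : ℂ)) • (N ^ j) v ∈ S := by
          refine Submodule.sum_mem _ fun j hj => Submodule.smul_mem _ _ ?_
          have hjl := (Finset.mem_erase.1 hj).1
          exact hne _ (by simp only; omega) _ (pow_mem N hNI j _ v hv)
        have h3 := (Submodule.add_mem_iff_left S hrest).1 hE
        rw [hvu] at h3
        refine (Submodule.smul_mem_iff S ?_).1 h3
        exact div_ne_zero (pow_ne_zero _ hw) (by exact_mod_cast l.factorial_ne_zero)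
      · rw [← hvu, pow_eq_zero_of_le (by omega) hK, LinearMap.zero_apply]
        exact Submodule.zero_mem _
    rw [eq_top_iff]
    intro x _
    rw [← h.sum x]
    refine Submodule.sum_mem _ fun a _ => ?_
    obtain ⟨p, q⟩ := a
    by_cases hp : p = k
    · subst hp
      exact key q _ (h.mem _ x)
    · exact hne _ hp _ (h.mem _ x)

end

end SplitMHS


/-- Split case of the converse nilpotent orbit theorem: for a mixed Hodge
structure `(H, W, F)` split over `ℝ` (via a Deligne bigrading `I^{p,q}` with
`conj I^{p,q} = I^{q,p}`), with a real nilpotent `N` satisfying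
`N I^{p,q} ⊆ I^{p-1,q-1}` and `W = W(N,d)`, the filtration `exp(zN) F^k` is
`d`-opposed to its complex conjugate whenever `Im z ≠ 0`:
`exp(zN) F^k ⊕ conj (exp(zN) F^{d-k+1}) = H`. -/
theorem split_mhs_opposedness
    (H : Type) [AddCommGroup H] [Module ℂ H] [FiniteDimensional ℂ H]
    -- real structure
    (σ : H → H)
    (hσadd : ∀ u v : H, σ (u + v) = σ u + σ v)
    (hσsmul : ∀ (c : ℂ) (v : H), σ (c • v) = (starRingEnd ℂ c) • σ v)
    (hσinv : ∀ v : H, σ (σ v) = v)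
    (d : ℤ)
    -- Deligne splitting
    (I : ℤ × ℤ → Submodule ℂ H)
    (hI : DirectSum.IsInternal I)
    (hIconj : ∀ pq : ℤ × ℤ,
      Submodule.span ℂ (σ '' (I pq : Set H)) = I (pq.2, pq.1))
    -- weight and Hodge filtrations of the split mixed Hodge structure
    (W F : ℤ → Submodule ℂ H)
    (hW : ∀ l : ℤ, W l = ⨆ pq : ℤ × ℤ, ⨆ _ : pq.1 + pq.2 ≤ l, I pq)
    (hF : ∀ r : ℤ, F r = ⨆ pq : ℤ × ℤ, ⨆ _ : r ≤ pq.1, I pq)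
    -- real nilpotent endomorphism of type (-1,-1)
    (N : H →ₗ[ℂ] H) (hNnil : IsNilpotent N)
    (hNreal : ∀ v : H, σ (N v) = N (σ v))
    (hNI : ∀ pq : ℤ × ℤ, Submodule.map N (I pq) ≤ I (pq.1 - 1, pq.2 - 1))
    -- W is the monodromy weight filtration of N centered at d
    (hWN : ∀ l : ℕ,
      (∀ x ∈ W (d + l), (N ^ l) x ∈ W (d - l - 1) → x ∈ W (d + l - 1)) ∧
      (W (d - l) ≤ Submodule.map (N ^ l : H →ₗ[ℂ] H) (W (d + l)) ⊔ W (d - l - 1)))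
    -- the exponential exp(zN)
    (K : ℕ) (hK : N ^ K = 0)
    (E : ℂ → (H →ₗ[ℂ] H))
    (hE : ∀ z : ℂ,
      E z = ∑ j ∈ Finset.range K, (z ^ j / (j.factorial : ℂ)) • (N ^ j)) :
    ∀ (k : ℤ) (z : ℂ), z.im ≠ 0 →
      IsCompl (Submodule.map (E z) (F k))
        (Submodule.span ℂ
          (σ '' (Submodule.map (E z) (F (d - k + 1)) : Set H))) := by
  intro k z hz
  obtain ⟨π, T, h⟩ := SplitMHS.exists_proj I hI
  -- the real structure as a semilinear map
  let S : H →ₛₗ[starRingEnd ℂ] H :=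
    { toFun := σ, map_add' := hσadd, map_smul' := hσsmul }
  have hspan : ∀ p : Submodule ℂ H, Submodule.span ℂ (σ '' (p : Set H)) = p.map S := by
    intro p
    have : σ '' (p : Set H) = (p.map S : Set H) := rfl
    rw [this, Submodule.span_eq]
  have hSF : ∀ r, (F r).map S = SplitMHS.GG I r := by
    intro r
    rw [hF r]
    simp only [Submodule.map_iSup]
    unfold SplitMHS.GG
    have hS : ∀ pq : ℤ × ℤ, (I pq).map S = I (pq.2, pq.1) := fun pq => by
      rw [← hspan, hIconj]
    simp only [hS]
    exact (Equiv.prodComm ℤ ℤ).iSup_congr fun pq => rfl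
  have hEx : ∀ z, E z = SplitMHS.ex N K z := hE
  have hNS : ∀ (j : ℕ) v, σ ((N ^ j) v) = (N ^ j) (σ v) := by
    intro j
    induction j with
    | zero => intro v; simp
    | succ j ih =>
      intro v
      rw [pow_succ', Module.End.mul_apply, Module.End.mul_apply, hNreal, ih]
  have hSE : ∀ v, S (E z v) = E (starRingEnd ℂ z) (S v) := by
    intro v
    rw [hEx, hEx, SplitMHS.ex_apply, SplitMHS.ex_apply, map_sum]
    refine Finset.sum_congr rfl fun j _ => ?_
    rw [LinearMap.map_smulₛₗ]
    change _ • σ ((N ^ j) v) = _ • (N ^ j) (σ v)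
    rw [hNS]
    simp
  have hconj : Submodule.span ℂ (σ '' (Submodule.map (E z) (F (d - k + 1)) : Set H))
      = (SplitMHS.GG I (d - k + 1)).map (E (starRingEnd ℂ z)) := by
    rw [hspan, ← hSF]
    ext x
    constructor
    · rintro ⟨_, ⟨v, hv, rfl⟩, rfl⟩
      exact ⟨S v, ⟨v, hv, rfl⟩, (hSE v).symm⟩
    · rintro ⟨_, ⟨v, hv, rfl⟩, rfl⟩
      exact ⟨E z v, ⟨v, hv, rfl⟩, hSE v⟩
  rw [hconj, hEx, hEx]
  set w : ℂ := starRingEnd ℂ z - z with hwdef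
  have hw : w ≠ 0 := by
    intro h0
    have := congrArg Complex.im h0
    simp [hwdef] at this
    apply hz
    linarith
  have hWmem : ∀ l x, x ∈ W l ↔ ∀ a : ℤ × ℤ, ¬ (a.1 + a.2 ≤ l) → π a x = 0 := by
    intro l x
    rw [hW l, h.mem_iff]
  have hinj : ∀ (a : ℤ × ℤ) (l : ℕ), (l : ℤ) ≤ a.1 + a.2 - d →
      ∀ x ∈ I a, (N ^ l) x = 0 → x = 0 := by
    intro a l hl x hx hN
    obtain ⟨m, hm⟩ : ∃ m : ℕ, (m : ℤ) = a.1 + a.2 - d :=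
      ⟨(a.1 + a.2 - d).toNat, Int.toNat_of_nonneg (by omega)⟩
    have hNm : (N ^ m) x = 0 := by
      obtain ⟨c, rfl⟩ : ∃ c, m = c + l := ⟨m - l, by omega⟩
      rw [pow_add, Module.End.mul_apply, hN, map_zero]
    have h1 := (hWN m).1 x ((hWmem _ _).2 fun b hb =>
      h.ne a b x hx (by rintro rfl; omega)) (by rw [hNm]; exact Submodule.zero_mem _)
    rw [← h.same a x hx]
    exact (hWmem _ _).1 h1 a (by omega)
  have hsurj : ∀ (a : ℤ × ℤ) (l : ℕ), d - l = a.1 + a.2 → ∀ u ∈ I a,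
      ∃ v ∈ I (a.1 + l, a.2 + l), (N ^ l) v = u := by
    intro a l hl u hu
    have h1 := (hWN l).2 ((hWmem (d - l) u).2 fun b hb =>
      h.ne a b u hu (by rintro rfl; omega))
    obtain ⟨_, ⟨v, _, rfl⟩, r, hr, hvr⟩ := Submodule.mem_sup.1 h1
    refine ⟨π (a.1 + l, a.2 + l) v, h.mem _ _, ?_⟩
    rw [← h.comm_pow N hNI, ← h.same a u hu, ← hvr, map_add,
      (hWmem _ _).1 hr a (by omega), add_zero]
  obtain ⟨B, hB⟩ : ∃ B : ℤ, ∀ a ∈ T, |a.1| < B := by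
    refine ⟨∑ a ∈ T, |a.1| + 1, fun a ha => ?_⟩
    have := Finset.single_le_sum (f := fun a : ℤ × ℤ => |a.1|) (fun i _ => abs_nonneg _) ha
    omega
  have hdis := h.disj N hNI K hK w hw d hinj B (fun a ha => (abs_lt.1 (hB a ha)).2)
    (B - k).toNat k (by have := Int.self_le_toNat (B - k); omega)
  have hcod := h.codisj N hNI K hK w hw d hsurj B (fun a ha => (abs_lt.1 (hB a ha)).1)
    (k + B).toNat k (by have := Int.self_le_toNat (k + B); omega)
  have hFk : F k = SplitMHS.FF I k := hF k
  rw [← hFk] at hcod hdis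
  constructor
  · rw [Submodule.disjoint_def]
    rintro _ ⟨x, hx, rfl⟩ ⟨y, hy, hxy⟩
    have hx0 : x = 0 := by
      apply hdis x hx
      refine ⟨y, hy, ?_⟩
      have := congrArg (SplitMHS.ex N K (-z)) hxy
      rw [SplitMHS.ex_add N K hK, SplitMHS.ex_add N K hK, neg_add_cancel,
        SplitMHS.ex_zero N K hK] at this
      rw [← this, hwdef, sub_eq_neg_add]
    rw [hx0, map_zero]
  · rw [codisjoint_iff, eq_top_iff]
    intro x _
    have hx : SplitMHS.ex N K (-z) x ∈
        F k ⊔ (SplitMHS.GG I (d - k + 1)).map (SplitMHS.ex N K w) := hcod ▸ Submodule.mem_top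
    obtain ⟨f, hf, _, ⟨g, hg, rfl⟩, hfg⟩ := Submodule.mem_sup.1 hx
    have := congrArg (SplitMHS.ex N K z) hfg
    rw [map_add, SplitMHS.ex_add N K hK, SplitMHS.ex_add N K hK, add_neg_cancel,
      SplitMHS.ex_zero N K hK, hwdef, add_sub_cancel] at this
    rw [← this]
    exact Submodule.add_mem_sup ⟨f, hf, rfl⟩ ⟨g, hg, rfl⟩
end
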